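/- For every triple of fixed integers d ≥ 0, k ≥ 1 and m ≥ 1, as the integer b → ∞ (with b > d), the complementary moment satisfies v_{k;m}(b,d) = b/(m+1) + (d + 1/2)m/b^{2k+1} + (d + 1/2)(1 + mk − m(m−1)d)/b^{2k+2} + O(b^{−2k−3}), the implied constant depending on d, k and m. -/

import Mathlib

/-!
Splitting off the leading digit of a string makes the Irwin measures self-similar, which gives a
recursion for the moments `v_{k;m}` in terms of `v_{k;j}` and `v_{k-1;j}` with `j ≤ m`. The numbers
`b / (m + 1)`, the moments of `b` times Lebesgue measure, solve the recursion for `k ≥ 1` exactly,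
so the deviations `v_{k;m} - b / (m + 1)` solve it as well, and they vanish for `m = 0`. As a
consequence each step `k → k + 1` gains a factor of order `b⁻²`. After multiplication by
`b ^ (2 * k + 1)` the recursion reads `F = b⁻¹ T F + s`, with `T` triangular in the order `m` and
bounded, and with `s` determined by the solution for `k - 1`. Iterating it gives `F` to second order
in `b⁻¹`, by induction on `k`.
-/

open Filter Asymptotics

/-- The `m`-th complementary moment of the Irwin measure:
`v_{k;m}(b,d) = ∑_{l≥0} b^{-l(m+1)} ∑_{n=0}^{b^l-1} [n has exactly k base-b digits d
(padded to length l)] · (b^l - n)^m`. -/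
noncomputable def momentV (b d k m : ℕ) : ℝ :=
  ∑' l : ℕ, ((b : ℝ) ^ (l * (m + 1)))⁻¹ *
    ∑ n ∈ Finset.range (b ^ l),
      (if ((Finset.range l).filter fun i => n / b ^ i % b = d).card = k
        then ((b : ℝ) ^ l - n) ^ m else 0)

section Asymptotics

variable {α : Type*} {l : Filter α}

theorem isBigO_mul_sub_mul {R S : Type*} [SeminormedRing R] [NormedRing S] [NormMulClass S]
    [NormOneClass S] {f f' g g' : α → R} {h : α → S}
    (hf : (fun x => f x - f' x) =O[l] h) (hg : (fun x => g x - g' x) =O[l] h)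
    (hf' : f' =O[l] fun _ => (1 : S)) (hg_bdd : g =O[l] fun _ => (1 : S)) :
    (fun x => f x * g x - f' x * g' x) =O[l] h := by
  have h₁ := hf.mul hg_bdd
  have h₂ := hf'.mul hg
  simp only [mul_one, one_mul] at h₁ h₂
  refine (h₁.add h₂).congr_left fun x => ?_
  noncomm_ring

theorem isBigO_const_mul_mul_one {R : Type*} [NormedRing R] [NormMulClass R] [NormOneClass R]
    {f g : α → R} (c : R) (hf : f =O[l] fun _ => (1 : R)) (hg : g =O[l] fun _ => (1 : R)) :
    (fun x => c * (f x * g x)) =O[l] fun _ => (1 : R) := by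
  have h := hf.mul hg
  simp only [mul_one] at h
  exact h.const_mul_left c

theorem isBigO_sum_range_mul_pow_sub {R : Type*} [NormedCommRing R] [NormMulClass R]
    [NormOneClass R] {u : α → R} {c : ℕ → α → R} {n N : ℕ} (hu : u =O[l] fun _ => (1 : R))
    (hc : ∀ j < n + N, c j =O[l] fun _ => (1 : R)) :
    (fun x => ∑ j ∈ Finset.range (n + N), c j x * u x ^ j
      - ∑ j ∈ Finset.range N, c j x * u x ^ j) =O[l] fun x => u x ^ N := by
  have hterm : ∀ j ∈ Finset.range n,
      (fun x => u x ^ N * (c (N + j) x * u x ^ j)) =O[l] fun x => u x ^ N := fun j hj => by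
    have hbdd := (hc (N + j) (by have := Finset.mem_range.1 hj; omega)).mul (hu.pow j)
    simpa using (isBigO_refl (fun x => u x ^ N) l).mul hbdd
  refine (IsBigO.fun_sum hterm).congr_left fun x => ?_
  rw [add_comm n N, Finset.sum_range_add, add_sub_cancel_left]
  exact Finset.sum_congr rfl fun j _ => by ring

theorem isBigO_sum_range_mul_pow_one {R : Type*} [NormedCommRing R] [NormMulClass R]
    [NormOneClass R] {u : α → R} {c : ℕ → α → R} {n : ℕ} (hu : u =O[l] fun _ => (1 : R))
    (hc : ∀ j < n, c j =O[l] fun _ => (1 : R)) :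
    (fun x => ∑ j ∈ Finset.range n, c j x * u x ^ j) =O[l] fun _ => (1 : R) := by
  simpa using isBigO_sum_range_mul_pow_sub (N := 0) hu hc

theorem isBigO_one_add_pow_sub {R : Type*} [NormedCommRing R] [NormMulClass R]
    [NormOneClass R] {u : α → R} (hu : u =O[l] fun _ => (1 : R)) (n : ℕ) :
    (fun x => (1 + u x) ^ n - (1 + n * u x)) =O[l] fun x => u x ^ 2 := by
  refine (isBigO_sum_range_mul_pow_sub (c := fun j _ => (n.choose j : R)) (n := n) (N := 2) hu
    fun j _ => isBigO_const_one R _ l).congr_left fun x => ?_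
  have hbinom : (1 + u x) ^ n = ∑ j ∈ Finset.range (n + 2), (n.choose j : R) * u x ^ j := by
    rw [Finset.sum_range_succ, Nat.choose_succ_self, Nat.cast_zero, zero_mul, add_zero, add_comm,
      add_pow]
    exact Finset.sum_congr rfl fun j _ => by rw [one_pow, mul_one, mul_comm]
  simp [hbinom, Finset.sum_range_succ]

theorem isBigO_natCast_inv_one : (fun b : ℕ => (b : ℝ)⁻¹) =O[atTop] fun _ => (1 : ℝ) :=
  tendsto_inv_atTop_nhds_zero_nat.isBigO_one ℝ

theorem isBigO_natCast_inv_sq_inv :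
    (fun b : ℕ => (b : ℝ)⁻¹ ^ 2) =O[atTop] fun b : ℕ => (b : ℝ)⁻¹ := by
  simpa [sq] using isBigO_natCast_inv_one.mul (isBigO_refl (fun b : ℕ => (b : ℝ)⁻¹) atTop)

theorem isBigO_one_of_sub_const {F : ℕ → ℝ} {a : ℝ}
    (h : (fun b => F b - a) =O[atTop] fun b : ℕ => (b : ℝ)⁻¹) : F =O[atTop] fun _ => (1 : ℝ) :=
  (IsBigO.sub_iff_left (isBigO_const_one ℝ a atTop)).1 (h.trans isBigO_natCast_inv_one)

theorem isBigO_sub_const_of_sub_affine {F : ℕ → ℝ} {a c : ℝ}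
    (h : (fun b => F b - (a + c * (b : ℝ)⁻¹)) =O[atTop] fun b : ℕ => (b : ℝ)⁻¹ ^ 2) :
    (fun b => F b - a) =O[atTop] fun b : ℕ => (b : ℝ)⁻¹ :=
  ((h.trans isBigO_natCast_inv_sq_inv).add
    ((isBigO_refl (fun b : ℕ => (b : ℝ)⁻¹) atTop).const_mul_left c)).congr_left fun b => by ring

end Asymptotics

theorem sum_range_mul_eq_sum_sum {M : Type*} [AddCommMonoid M] (c L : ℕ) (F : ℕ → M) :
    ∑ n ∈ Finset.range (c * L), F n
      = ∑ a ∈ Finset.range c, ∑ n ∈ Finset.range L, F (a * L + n) := by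
  induction c with
  | zero => simp
  | succ c ih => rw [Finset.sum_range_succ, ← ih, Nat.succ_mul, Finset.sum_range_add]

/-- The number of digits `d` among the `l` lowest base-`b` digits of `n`. -/
def digitCount (b d l n : ℕ) : ℕ := ((Finset.range l).filter fun i => n / b ^ i % b = d).card

theorem digitCount_mul_pow_add {a b l n : ℕ} (d : ℕ) (ha : a < b) (hn : n < b ^ l) :
    digitCount b d (l + 1) (a * b ^ l + n) = digitCount b d l n + if a = d then 1 else 0 := by
  have hb : 0 < b := a.zero_le.trans_lt ha
  have hlead : (a * b ^ l + n) / b ^ l % b = a := by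
    rw [mul_comm, Nat.mul_add_div (by positivity), Nat.div_eq_of_lt hn, add_zero,
      Nat.mod_eq_of_lt ha]
  have hlow : ∀ i ∈ Finset.range l, (a * b ^ l + n) / b ^ i % b = n / b ^ i % b := fun i hi => by
    obtain ⟨c, rfl⟩ := Nat.exists_eq_add_of_lt (Finset.mem_range.1 hi)
    have hsplit : a * b ^ (i + c + 1) + n = b ^ i * (b * (a * b ^ c)) + n := by ring
    rw [hsplit, Nat.mul_add_div (by positivity), Nat.mul_add_mod]
  simp only [digitCount, Finset.card_filter]
  rw [Finset.sum_range_succ, hlead]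
  exact congrArg (· + _) (Finset.sum_congr rfl fun i hi => by rw [hlow i hi])

/-- In the complementary variable `1 - x` on `[0, 1]`, the left endpoint of the cell of the numbers
`x` whose leading base-`b` digit is `a`. -/
noncomputable def complNode (a b : ℕ) : ℝ := 1 - (a + 1) * (b : ℝ)⁻¹

/-- The contribution of the strings of length `l` to the integral of `f (1 - x)` against the Irwin
measure, a string with `c` digits equal to `d` being weighted by `w c`. The weight `Pi.single k 1`
selects the strings with exactly `k` digits `d`. -/
noncomputable def levelSum (b d : ℕ) (w : ℕ → ℝ) (f : ℝ → ℝ) (l : ℕ) : ℝ :=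
  ((b : ℝ) ^ l)⁻¹ * ∑ n ∈ Finset.range (b ^ l), w (digitCount b d l n) * f (1 - n / (b : ℝ) ^ l)

section LevelSum

variable {b d : ℕ}

theorem momentV_eq_tsum_levelSum (hb : 0 < b) (k m : ℕ) :
    momentV b d k m = ∑' l, levelSum b d (Pi.single k 1) (· ^ m) l := by
  refine tsum_congr fun l => ?_
  have hb' : (b : ℝ) ^ l ≠ 0 := by positivity
  have hpow : (b : ℝ) ^ (l * (m + 1)) = (b : ℝ) ^ l * ((b : ℝ) ^ l) ^ m := by ring
  rw [levelSum, hpow, mul_inv, mul_assoc, Finset.mul_sum]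
  refine congrArg _ (Finset.sum_congr rfl fun n _ => ?_)
  simp only [Pi.single_apply, digitCount]
  rw [one_sub_div hb', div_pow]
  split_ifs <;> ring

theorem levelSum_zero_right (w : ℕ → ℝ) (f : ℝ → ℝ) : levelSum b d w f 0 = w 0 * f 1 := by
  simp [levelSum, digitCount]

theorem levelSum_zero_weight (f : ℝ → ℝ) (l : ℕ) : levelSum b d (fun _ => 0) f l = 0 := by
  simp [levelSum]

theorem levelSum_le_levelSum {w : ℕ → ℝ} {f g : ℝ → ℝ} (hw : 0 ≤ w)
    (hfg : ∀ x ∈ Set.Icc (0 : ℝ) 1, f x ≤ g x) (l : ℕ) :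
    levelSum b d w f l ≤ levelSum b d w g l := by
  refine mul_le_mul_of_nonneg_left (Finset.sum_le_sum fun n hn => ?_) (by positivity)
  have hn' : (n : ℝ) ≤ (b : ℝ) ^ l := by exact_mod_cast (Finset.mem_range.1 hn).le
  have hx : 1 - (n : ℝ) / (b : ℝ) ^ l ∈ Set.Icc (0 : ℝ) 1 :=
    ⟨sub_nonneg.2 (div_le_one_of_le₀ hn' (by positivity)), sub_le_self _ (by positivity)⟩
  exact mul_le_mul_of_nonneg_left (hfg _ hx) (hw _)

theorem levelSum_pow_nonneg {w : ℕ → ℝ} (hw : 0 ≤ w) (m l : ℕ) :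
    0 ≤ levelSum b d w (· ^ m) l := by
  have h := levelSum_le_levelSum (b := b) (d := d) (f := fun _ => 0) hw
    (fun x hx => pow_nonneg hx.1 m) l
  simpa [levelSum] using h

/-- Splitting off the leading digit `a` of a string is the self-similarity
`x ↦ complNode a b + x / b`. -/
theorem levelSum_succ (hd : d < b) (w : ℕ → ℝ) (f : ℝ → ℝ) (l : ℕ) :
    levelSum b d w f (l + 1) = (b : ℝ)⁻¹ *
      (∑ a ∈ Finset.range b, levelSum b d w (fun x => f (complNode a b + (b : ℝ)⁻¹ * x)) l
        + (levelSum b d (fun c => w (c + 1)) (fun x => f (complNode d b + (b : ℝ)⁻¹ * x)) l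
          - levelSum b d w (fun x => f (complNode d b + (b : ℝ)⁻¹ * x)) l)) := by
  have hb : (b : ℝ) ≠ 0 := by exact_mod_cast (d.zero_le.trans_lt hd).ne'
  have hblock : levelSum b d w f (l + 1) = (b : ℝ)⁻¹ * ∑ a ∈ Finset.range b,
      levelSum b d (fun c => w (c + if a = d then 1 else 0))
        (fun x => f (complNode a b + (b : ℝ)⁻¹ * x)) l := by
    simp only [levelSum]
    rw [pow_succ' b l, sum_range_mul_eq_sum_sum, pow_succ', mul_inv, mul_assoc, ← Finset.mul_sum]
    refine congrArg _ (congrArg _ (Finset.sum_congr rfl fun a ha => Finset.sum_congr rfl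
      fun n hn => ?_))
    have hx : 1 - ((a * b ^ l + n : ℕ) : ℝ) / (b * (b : ℝ) ^ l)
        = complNode a b + (b : ℝ)⁻¹ * (1 - n / (b : ℝ) ^ l) := by
      rw [complNode]
      push_cast
      field_simp
      ring
    rw [digitCount_mul_pow_add d (Finset.mem_range.1 ha) (Finset.mem_range.1 hn), hx]
  rw [hblock, ← Finset.add_sum_erase _ _ (Finset.mem_range.2 hd),
    ← Finset.add_sum_erase (Finset.range b) (fun a => levelSum b d w _ l) (Finset.mem_range.2 hd),
    Finset.sum_congr rfl fun a ha => by rw [if_neg (Finset.ne_of_mem_erase ha)], if_pos rfl]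
  simp only [add_zero]
  ring

theorem levelSum_add_mul_pow (w : ℕ → ℝ) (c u : ℝ) (m l : ℕ) :
    levelSum b d w (fun x => (c + u * x) ^ m) l
      = ∑ j ∈ Finset.range (m + 1), (m.choose j : ℝ) * c ^ (m - j) * u ^ j *
          levelSum b d w (· ^ j) l := by
  simp only [levelSum, Finset.mul_sum]
  rw [Finset.sum_comm]
  refine Finset.sum_congr rfl fun n _ => ?_
  rw [add_comm, add_pow, Finset.mul_sum, Finset.mul_sum]
  exact Finset.sum_congr rfl fun j _ => by rw [mul_pow]; ring

end LevelSum

/-- The mean `b⁻¹ ∑ (complNode a b) ^ i` over all digits `a < b`, a Riemann sum for `∫₀¹ xⁱ`. -/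
noncomputable def nodePowerMean (i b : ℕ) : ℝ :=
  (b : ℝ)⁻¹ * ∑ a ∈ Finset.range b, complNode a b ^ i

/-- The part of `nodePowerMean i b` contributed by the digits other than `d`, for `d < b`. -/
noncomputable def puncturedPowerMean (d i b : ℕ) : ℝ :=
  nodePowerMean i b - (b : ℝ)⁻¹ * complNode d b ^ i

section MomentRecursion

variable {b d : ℕ}

theorem levelSum_pow_succ (hd : d < b) (w : ℕ → ℝ) (m l : ℕ) :
    levelSum b d w (· ^ m) (l + 1) = ∑ j ∈ Finset.range (m + 1), (m.choose j : ℝ) *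
      (puncturedPowerMean d (m - j) b * (b : ℝ)⁻¹ ^ j * levelSum b d w (· ^ j) l
        + complNode d b ^ (m - j) * (b : ℝ)⁻¹ ^ (j + 1) *
          levelSum b d (fun c => w (c + 1)) (· ^ j) l) := by
  rw [levelSum_succ hd]
  simp only [levelSum_add_mul_pow]
  rw [Finset.sum_comm, ← Finset.sum_sub_distrib, ← Finset.sum_add_distrib, Finset.mul_sum]
  refine Finset.sum_congr rfl fun j _ => ?_
  simp only [← Finset.sum_mul, ← Finset.mul_sum]
  rw [puncturedPowerMean, nodePowerMean]
  ring

theorem nodePowerMean_zero (hb : 0 < b) : nodePowerMean 0 b = 1 := by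
  have hb' : (b : ℝ) ≠ 0 := by positivity
  simp [nodePowerMean, hb']

theorem sum_range_levelSum_pow_zero (hd : d < b) (w : ℕ → ℝ) (N : ℕ) :
    ∑ l ∈ Finset.range N, levelSum b d w (· ^ 0) l
      = ∑ l ∈ Finset.range N, levelSum b d (fun c => w (c + 1)) (· ^ 0) l
        + b * (w 0 - levelSum b d w (· ^ 0) N) := by
  have hb : 0 < b := d.zero_le.trans_lt hd
  have hb' : (b : ℝ) ≠ 0 := by positivity
  induction N with
  | zero => simp [levelSum_zero_right]
  | succ N ih =>
    rw [Finset.sum_range_succ, Finset.sum_range_succ, ih, levelSum_pow_succ hd]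
    simp only [puncturedPowerMean, nodePowerMean_zero hb, zero_add, Finset.sum_range_one,
      Nat.sub_zero, Nat.choose_self, Nat.cast_one, pow_zero, pow_one]
    field_simp
    ring

theorem single_succ_comp_succ (k : ℕ) :
    (fun c => (Pi.single (k + 1) 1 : ℕ → ℝ) (c + 1)) = Pi.single k 1 := by
  ext c
  simp [Pi.single_apply]

theorem single_zero_comp_succ : (fun c => (Pi.single 0 1 : ℕ → ℝ) (c + 1)) = fun _ => 0 := by
  ext c
  simp

theorem single_one_nonneg (k : ℕ) : 0 ≤ (Pi.single k 1 : ℕ → ℝ) :=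
  Pi.single_nonneg.2 zero_le_one

theorem sum_range_levelSum_single_le (hd : d < b) (k N : ℕ) :
    ∑ l ∈ Finset.range N, levelSum b d (Pi.single k 1) (· ^ 0) l ≤ b := by
  have hnonneg (k : ℕ) : 0 ≤ (b : ℝ) * levelSum b d (Pi.single k 1) (· ^ 0) N :=
    mul_nonneg b.cast_nonneg (levelSum_pow_nonneg (single_one_nonneg k) 0 N)
  induction k with
  | zero =>
    rw [sum_range_levelSum_pow_zero hd, single_zero_comp_succ]
    simpa [levelSum_zero_weight, mul_sub] using hnonneg 0
  | succ k ih =>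
    rw [sum_range_levelSum_pow_zero hd, single_succ_comp_succ]
    have hzero : (Pi.single (k + 1) 1 : ℕ → ℝ) 0 = 0 := by simp
    rw [hzero]
    linarith [hnonneg (k + 1)]

theorem summable_levelSum_single (hd : d < b) (k m : ℕ) :
    Summable (levelSum b d (Pi.single k 1) (· ^ m)) := by
  have hw := single_one_nonneg k
  have hmass : Summable (levelSum b d (Pi.single k 1) (· ^ 0)) :=
    summable_of_sum_range_le (levelSum_pow_nonneg hw 0) (sum_range_levelSum_single_le hd k)
  refine hmass.of_nonneg_of_le (levelSum_pow_nonneg hw m) fun l => ?_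
  exact levelSum_le_levelSum hw (fun x hx => by simpa using pow_le_one₀ hx.1 hx.2) l

theorem tsum_levelSum_pow (hd : d < b) {w : ℕ → ℝ} {m : ℕ}
    (hw : ∀ j ≤ m, Summable (levelSum b d w (· ^ j)))
    (hw_succ : ∀ j ≤ m, Summable (levelSum b d (fun c => w (c + 1)) (· ^ j))) :
    ∑' l, levelSum b d w (· ^ m) l = w 0 + ∑ j ∈ Finset.range (m + 1), (m.choose j : ℝ) *
      (puncturedPowerMean d (m - j) b * (b : ℝ)⁻¹ ^ j * ∑' l, levelSum b d w (· ^ j) l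
        + complNode d b ^ (m - j) * (b : ℝ)⁻¹ ^ (j + 1) *
          ∑' l, levelSum b d (fun c => w (c + 1)) (· ^ j) l) := by
  rw [(hw m le_rfl).tsum_eq_zero_add, levelSum_zero_right, one_pow, mul_one]
  simp_rw [levelSum_pow_succ hd]
  refine congrArg _ (hasSum_sum fun j hj => ?_).tsum_eq
  have hj' : j ≤ m := Finset.mem_range_succ_iff.1 hj
  exact (((hw j hj').hasSum.mul_left _).add ((hw_succ j hj').hasSum.mul_left _)).mul_left _

theorem momentV_zero_eq (hd : d < b) (m : ℕ) :
    momentV b d 0 m = 1 + ∑ j ∈ Finset.range (m + 1), (m.choose j : ℝ) *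
      (puncturedPowerMean d (m - j) b * (b : ℝ)⁻¹ ^ j * momentV b d 0 j) := by
  have h := tsum_levelSum_pow hd (w := Pi.single 0 1) (m := m)
    (fun j _ => summable_levelSum_single hd 0 j)
    (fun j _ => by
      rw [single_zero_comp_succ]
      exact summable_zero.congr fun l => (levelSum_zero_weight _ l).symm)
  simpa [single_zero_comp_succ, levelSum_zero_weight,
    ← momentV_eq_tsum_levelSum (d.zero_le.trans_lt hd)] using h

theorem momentV_succ_eq (hd : d < b) (k m : ℕ) :
    momentV b d (k + 1) m = ∑ j ∈ Finset.range (m + 1), (m.choose j : ℝ) *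
      (puncturedPowerMean d (m - j) b * (b : ℝ)⁻¹ ^ j * momentV b d (k + 1) j
        + complNode d b ^ (m - j) * (b : ℝ)⁻¹ ^ (j + 1) * momentV b d k j) := by
  have h := tsum_levelSum_pow hd (w := Pi.single (k + 1) 1) (m := m)
    (fun j _ => summable_levelSum_single hd (k + 1) j)
    (fun j _ => by
      rw [single_succ_comp_succ]
      exact summable_levelSum_single hd k j)
  simpa [single_succ_comp_succ, ← momentV_eq_tsum_levelSum (d.zero_le.trans_lt hd)] using h

end MomentRecursion

theorem sum_choose_mul_pow_mul_pow_div (c u : ℝ) (m : ℕ) :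
    ∑ j ∈ Finset.range (m + 1), (m.choose j : ℝ) * c ^ (m - j) * u ^ (j + 1) / (j + 1)
      = ((c + u) ^ (m + 1) - c ^ (m + 1)) / (m + 1) := by
  rw [eq_div_iff (by positivity), Finset.sum_mul, add_comm c u, add_pow,
    Finset.sum_range_succ' _ (m + 1)]
  simp only [pow_zero, one_mul, Nat.sub_zero, Nat.choose_zero_right, Nat.cast_one, mul_one,
    add_sub_cancel_right, Nat.add_sub_add_right]
  refine Finset.sum_congr rfl fun j _ => ?_
  have hchoose : ((m : ℝ) + 1) * m.choose j = (m + 1).choose (j + 1) * ((j : ℝ) + 1) := by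
    exact_mod_cast Nat.add_one_mul_choose_eq m j
  field_simp
  linear_combination c ^ (m - j) * u ^ (j + 1) * hchoose

theorem sum_choose_mul_nodePowerMean {b : ℕ} (hb : 0 < b) (m : ℕ) :
    ∑ j ∈ Finset.range (m + 1),
        (m.choose j : ℝ) * nodePowerMean (m - j) b * (b : ℝ)⁻¹ ^ j / (j + 1)
      = 1 / (m + 1) := by
  have hb' : (b : ℝ) ≠ 0 := by positivity
  calc
    _ = ∑ a ∈ Finset.range b, ∑ j ∈ Finset.range (m + 1),
          (m.choose j : ℝ) * complNode a b ^ (m - j) * (b : ℝ)⁻¹ ^ (j + 1) / (j + 1) := by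
      rw [Finset.sum_comm]
      refine Finset.sum_congr rfl fun j _ => ?_
      rw [← Finset.sum_div, ← Finset.sum_mul, ← Finset.mul_sum, nodePowerMean]
      ring
    _ = ∑ a ∈ Finset.range b, ((1 - (a : ℝ) * (b : ℝ)⁻¹) ^ (m + 1)
          - (1 - ((a + 1 : ℕ) : ℝ) * (b : ℝ)⁻¹) ^ (m + 1)) / (m + 1) := by
      refine Finset.sum_congr rfl fun a _ => ?_
      rw [sum_choose_mul_pow_mul_pow_div, complNode]
      push_cast
      ring
    _ = 1 / (m + 1) := by
      rw [← Finset.sum_div,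
        Finset.sum_range_sub' fun a : ℕ => (1 - (a : ℝ) * (b : ℝ)⁻¹) ^ (m + 1)]
      simp [hb']

/-- The deviation of the `m`-th complementary moment from its Lebesgue counterpart
`b ∫₀¹ xᵐ = b / (m + 1)`. -/
noncomputable def deviation (d k m b : ℕ) : ℝ := momentV b d k m - (b : ℝ) / (m + 1)

section Deviation

variable {b d : ℕ}

theorem sum_choose_mul_puncturedPowerMean (hb : 0 < b) (d m : ℕ) :
    ∑ j ∈ Finset.range (m + 1), (m.choose j : ℝ) *
      (puncturedPowerMean d (m - j) b * (b : ℝ)⁻¹ ^ j * (b / (j + 1))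
        + complNode d b ^ (m - j) * (b : ℝ)⁻¹ ^ (j + 1) * (b / (j + 1)))
      = b / (m + 1) := by
  calc
    _ = b * ∑ j ∈ Finset.range (m + 1),
          (m.choose j : ℝ) * nodePowerMean (m - j) b * (b : ℝ)⁻¹ ^ j / (j + 1) := by
      rw [Finset.mul_sum]
      exact Finset.sum_congr rfl fun j _ => by rw [puncturedPowerMean]; ring
    _ = b / (m + 1) := by rw [sum_choose_mul_nodePowerMean hb, mul_one_div]

theorem deviation_succ_eq (hd : d < b) (k m : ℕ) :
    deviation d (k + 1) m b = ∑ j ∈ Finset.range (m + 1), (m.choose j : ℝ) *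
      (puncturedPowerMean d (m - j) b * (b : ℝ)⁻¹ ^ j * deviation d (k + 1) j b
        + complNode d b ^ (m - j) * (b : ℝ)⁻¹ ^ (j + 1) * deviation d k j b) := by
  rw [deviation, momentV_succ_eq hd,
    ← sum_choose_mul_puncturedPowerMean (d.zero_le.trans_lt hd) d m, ← Finset.sum_sub_distrib]
  exact Finset.sum_congr rfl fun j _ => by rw [deviation, deviation]; ring

theorem deviation_zero_eq (hd : d < b) (m : ℕ) :
    deviation d 0 m b = 1 - ∑ j ∈ Finset.range (m + 1),
        (m.choose j : ℝ) * complNode d b ^ (m - j) / (j + 1) * (b : ℝ)⁻¹ ^ j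
      + ∑ j ∈ Finset.range (m + 1), (m.choose j : ℝ) *
        (puncturedPowerMean d (m - j) b * (b : ℝ)⁻¹ ^ j * deviation d 0 j b) := by
  have hb : 0 < b := d.zero_le.trans_lt hd
  have hb' : (b : ℝ) ≠ 0 := by positivity
  rw [deviation, momentV_zero_eq hd, ← sum_choose_mul_puncturedPowerMean hb d m, add_sub_assoc,
    sub_add, sub_eq_add_neg 1, neg_sub, ← Finset.sum_sub_distrib, ← Finset.sum_sub_distrib]
  refine congrArg _ (Finset.sum_congr rfl fun j _ => ?_)
  rw [deviation, pow_succ]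
  field_simp
  ring

theorem deviation_zero_order (hd : d < b) (k : ℕ) : deviation d k 0 b = 0 := by
  have hb : 0 < b := d.zero_le.trans_lt hd
  have hb' : (b : ℝ) ≠ 0 := by positivity
  induction k with
  | zero =>
    have h := deviation_zero_eq hd 0
    simp only [puncturedPowerMean, nodePowerMean_zero hb, zero_add, Finset.sum_range_one,
      Nat.sub_zero, Nat.choose_self, Nat.cast_one, Nat.cast_zero, pow_zero] at h
    field_simp at h
    linarith
  | succ k ih =>
    have h := deviation_succ_eq hd k 0
    simp only [puncturedPowerMean, nodePowerMean_zero hb, ih, zero_add, Finset.sum_range_one,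
      Nat.sub_zero, Nat.choose_self, Nat.cast_one, pow_zero] at h
    field_simp at h
    linarith

end Deviation

/-- The deviation of the moment of order `n + 1`, normalized to have a finite nonzero limit as
`b → ∞`. The order is shifted because the deviation of the moment of order `0` vanishes. -/
noncomputable def scaledDeviation (d k n b : ℕ) : ℝ :=
  (b : ℝ) ^ (2 * k + 1) * deviation d k (n + 1) b

/-- The part of the recursion for `scaledDeviation d k` that comes from the strings with leading
digit `d`, whose remaining digits contain `d` one time less. For `k = 0` there are no such strings;
what is left is the mass of the empty string minus the Lebesgue contribution of the digit `d`. -/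
noncomputable def deviationSource (d : ℕ) : ℕ → ℕ → ℕ → ℝ
  | 0, n, b => b * (1 - ∑ j ∈ Finset.range (n + 2),
      ((n + 1).choose j : ℝ) * complNode d b ^ (n + 1 - j) / (j + 1) * (b : ℝ)⁻¹ ^ j)
  | k + 1, n, b => ∑ j ∈ Finset.range (n + 1),
      ((n + 1).choose (j + 1) : ℝ) * (complNode d b ^ (n - j) * scaledDeviation d k j b)
        * (b : ℝ)⁻¹ ^ j

theorem deviationSource_succ_eq {b d : ℕ} (hd : d < b) (k n : ℕ) :
    deviationSource d (k + 1) n b = (b : ℝ) ^ (2 * (k + 1) + 1) * ∑ j ∈ Finset.range (n + 2),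
      ((n + 1).choose j : ℝ) *
        (complNode d b ^ (n + 1 - j) * (b : ℝ)⁻¹ ^ (j + 1) * deviation d k j b) := by
  have hb : (b : ℝ) ≠ 0 := by exact_mod_cast (d.zero_le.trans_lt hd).ne'
  rw [Finset.sum_range_succ', deviation_zero_order hd, mul_zero, mul_zero, add_zero,
    Finset.mul_sum, deviationSource]
  refine Finset.sum_congr rfl fun j _ => ?_
  have hpow : (b : ℝ) ^ (2 * (k + 1) + 1) * (b : ℝ)⁻¹ ^ (j + 1 + 1)
      = (b : ℝ) ^ (2 * k + 1) * (b : ℝ)⁻¹ ^ j := by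
    simp only [inv_pow]
    field_simp
    ring
  rw [Nat.add_sub_add_right, scaledDeviation]
  linear_combination -((n + 1).choose (j + 1) : ℝ) * complNode d b ^ (n - j)
    * deviation d k (j + 1) b * hpow

/-- `F` solves, for all large `b`, the triangular linear system with right-hand side `s` that the
scaled deviations satisfy. -/
def SolvesDeviationSystem (d : ℕ) (F s : ℕ → ℕ → ℝ) : Prop :=
  ∀ n, ∀ᶠ b : ℕ in atTop, F n b = (b : ℝ)⁻¹ * ∑ j ∈ Finset.range (n + 1),
    ((n + 1).choose (j + 1) : ℝ) * (puncturedPowerMean d (n - j) b * F j b) * (b : ℝ)⁻¹ ^ j + s n b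

theorem solvesDeviationSystem_scaledDeviation (d k : ℕ) :
    SolvesDeviationSystem d (scaledDeviation d k) (deviationSource d k) := by
  intro n
  filter_upwards [eventually_gt_atTop d] with b hd
  have hscale (k : ℕ) : (b : ℝ) ^ (2 * k + 1) * ∑ j ∈ Finset.range (n + 2),
        ((n + 1).choose j : ℝ) *
          (puncturedPowerMean d (n + 1 - j) b * (b : ℝ)⁻¹ ^ j * deviation d k j b)
      = (b : ℝ)⁻¹ * ∑ j ∈ Finset.range (n + 1), ((n + 1).choose (j + 1) : ℝ) *
          (puncturedPowerMean d (n - j) b * scaledDeviation d k j b) * (b : ℝ)⁻¹ ^ j := by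
    rw [Finset.sum_range_succ', deviation_zero_order hd, Finset.mul_sum, mul_zero, mul_zero,
      add_zero, Finset.mul_sum]
    refine Finset.sum_congr rfl fun j _ => ?_
    rw [Nat.add_sub_add_right, scaledDeviation]
    ring
  cases k with
  | zero =>
    rw [← hscale, scaledDeviation, deviation_zero_eq hd, deviationSource]
    ring
  | succ k =>
    rw [← hscale, deviationSource_succ_eq hd, scaledDeviation, deviation_succ_eq hd, ← mul_add,
      ← Finset.sum_add_distrib]
    simp only [mul_add]

section MeanAsymptotics

theorem isBigO_complNode_pow_sub_affine (d i : ℕ) :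
    (fun b => complNode d b ^ i - (1 + -(i * (d + 1) : ℝ) * (b : ℝ)⁻¹))
      =O[atTop] fun b : ℕ => (b : ℝ)⁻¹ ^ 2 := by
  have h := isBigO_one_add_pow_sub (isBigO_natCast_inv_one.const_mul_left (-(d + 1 : ℝ))) i
  refine (h.congr_left fun b => ?_).trans ?_
  · rw [complNode]
    ring
  · exact ((isBigO_refl (fun b : ℕ => (b : ℝ)⁻¹) atTop).const_mul_left _).pow 2

theorem isBigO_complNode_pow_sub_one (d i : ℕ) :
    (fun b => complNode d b ^ i - 1) =O[atTop] fun b : ℕ => (b : ℝ)⁻¹ :=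
  isBigO_sub_const_of_sub_affine (isBigO_complNode_pow_sub_affine d i)

theorem isBigO_complNode_pow_one (d i : ℕ) :
    (fun b => complNode d b ^ i) =O[atTop] fun _ => (1 : ℝ) :=
  isBigO_one_of_sub_const (isBigO_complNode_pow_sub_one d i)

theorem complNode_mem_Icc {a b : ℕ} (h : a < b) : complNode a b ∈ Set.Icc (0 : ℝ) 1 := by
  have hb : (0 : ℝ) < b := by exact_mod_cast a.zero_le.trans_lt h
  have hle : (a + 1 : ℝ) * (b : ℝ)⁻¹ ≤ 1 := by
    rw [← div_eq_mul_inv, div_le_one hb]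
    exact_mod_cast h
  exact ⟨sub_nonneg.2 hle, sub_le_self _ (by positivity)⟩

theorem nodePowerMean_mem_Icc (i b : ℕ) : nodePowerMean i b ∈ Set.Icc (0 : ℝ) 1 := by
  have hnode : ∀ a ∈ Finset.range b, complNode a b ∈ Set.Icc (0 : ℝ) 1 := fun a ha =>
    complNode_mem_Icc (Finset.mem_range.1 ha)
  have hnonneg : 0 ≤ ∑ a ∈ Finset.range b, complNode a b ^ i :=
    Finset.sum_nonneg fun a ha => pow_nonneg (hnode a ha).1 i
  have hsum : ∑ a ∈ Finset.range b, complNode a b ^ i ≤ b := by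
    simpa using Finset.sum_le_card_nsmul _ _ 1 fun a ha => pow_le_one₀ (hnode a ha).1 (hnode a ha).2
  exact ⟨mul_nonneg (by positivity) hnonneg,
    (mul_le_mul_of_nonneg_left hsum (by positivity)).trans inv_mul_le_one⟩

theorem isBigO_nodePowerMean_one (i : ℕ) : nodePowerMean i =O[atTop] fun _ => (1 : ℝ) :=
  isBigO_of_le _ fun b => by
    have h := nodePowerMean_mem_Icc i b
    rw [Real.norm_of_nonneg h.1, norm_one]
    exact h.2

-- The exact identity `sum_choose_mul_nodePowerMean` is `nodePowerMean i b + O(b⁻¹) = 1 / (i + 1)`.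
theorem isBigO_nodePowerMean_sub (i : ℕ) :
    (fun b => nodePowerMean i b - 1 / (i + 1)) =O[atTop] fun b : ℕ => (b : ℝ)⁻¹ := by
  have htrunc := isBigO_sum_range_mul_pow_sub (n := i) (N := 1)
    (c := fun j b => (i.choose j : ℝ) * nodePowerMean (i - j) b / (j + 1))
    isBigO_natCast_inv_one fun j _ => by
      have h := (isBigO_nodePowerMean_one (i - j)).const_mul_left ((i.choose j : ℝ) / (j + 1))
      exact h.congr_left fun b => (mul_div_right_comm _ _ _).symm
  simp only [pow_one] at htrunc
  refine htrunc.neg_left.congr' ?_ .rfl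
  filter_upwards [eventually_gt_atTop 0] with b hb
  have hexact : ∑ j ∈ Finset.range (i + 1),
      (i.choose j : ℝ) * nodePowerMean (i - j) b / (j + 1) * (b : ℝ)⁻¹ ^ j = 1 / (i + 1) := by
    rw [← sum_choose_mul_nodePowerMean hb i]
    exact Finset.sum_congr rfl fun j _ => by ring
  rw [hexact, Finset.sum_range_one]
  simp

theorem isBigO_puncturedPowerMean_sub (d i : ℕ) :
    (fun b => puncturedPowerMean d i b - 1 / (i + 1)) =O[atTop] fun b : ℕ => (b : ℝ)⁻¹ := by
  have hdigit := (isBigO_refl (fun b : ℕ => (b : ℝ)⁻¹) atTop).mul (isBigO_complNode_pow_one d i)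
  simp only [mul_one] at hdigit
  refine ((isBigO_nodePowerMean_sub i).sub hdigit).congr_left fun b => ?_
  rw [puncturedPowerMean]
  ring

theorem isBigO_puncturedPowerMean_one (d i : ℕ) :
    puncturedPowerMean d i =O[atTop] fun _ => (1 : ℝ) :=
  isBigO_one_of_sub_const (isBigO_puncturedPowerMean_sub d i)

end MeanAsymptotics

section SolvesDeviationSystem

variable {d : ℕ} {F s : ℕ → ℕ → ℝ} {a : ℕ → ℝ}

theorem SolvesDeviationSystem.isBigO_one (h : SolvesDeviationSystem d F s)
    (hs : ∀ n, s n =O[atTop] fun _ => (1 : ℝ)) (n : ℕ) : F n =O[atTop] fun _ => (1 : ℝ) := by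
  induction n using Nat.strong_induction_on with
  | h n ih =>
    have hlower : (fun b : ℕ => ∑ j ∈ Finset.range n, ((n + 1).choose (j + 1) : ℝ) *
        (puncturedPowerMean d (n - j) b * F j b) * (b : ℝ)⁻¹ ^ j)
          =O[atTop] fun _ => (1 : ℝ) :=
      isBigO_sum_range_mul_pow_one isBigO_natCast_inv_one fun j hj =>
        isBigO_const_mul_mul_one _ (isBigO_puncturedPowerMean_one d (n - j)) (ih j hj)
    have hdiag : (fun b : ℕ => (b : ℝ)⁻¹ * (puncturedPowerMean d 0 b * (b : ℝ)⁻¹ ^ n))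
        =o[atTop] fun _ => (1 : ℝ) := by
      simpa using ((isLittleO_one_iff ℝ).2 tendsto_inv_atTop_nhds_zero_nat).mul_isBigO
        ((isBigO_puncturedPowerMean_one d 0).mul (isBigO_natCast_inv_one.pow n))
    have hsmall := hdiag.mul_isBigO (isBigO_refl (F n) atTop)
    simp only [one_mul] at hsmall
    have hrest := (isBigO_natCast_inv_one.mul hlower).add (by simpa using hs n)
    simp only [mul_one] at hrest
    refine hsmall.right_isBigO_sub.trans (hrest.congr' ?_ .rfl)
    filter_upwards [h n] with b hb
    rw [Finset.sum_range_succ, Nat.choose_self, Nat.sub_self] at hb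
    push_cast at hb
    linear_combination -hb

theorem SolvesDeviationSystem.isBigO_sub_const (h : SolvesDeviationSystem d F s)
    (hs : ∀ n, (fun b => s n b - a n) =O[atTop] fun b : ℕ => (b : ℝ)⁻¹) (n : ℕ) :
    (fun b => F n b - a n) =O[atTop] fun b : ℕ => (b : ℝ)⁻¹ := by
  have hF := h.isBigO_one fun n => isBigO_one_of_sub_const (hs n)
  have hsum := (isBigO_refl (fun b : ℕ => (b : ℝ)⁻¹) atTop).mul
    (isBigO_sum_range_mul_pow_one (n := n + 1) isBigO_natCast_inv_one fun j _ =>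
      isBigO_const_mul_mul_one ((n + 1).choose (j + 1) : ℝ)
        (isBigO_puncturedPowerMean_one d (n - j)) (hF j))
  simp only [mul_one] at hsum
  refine (hsum.add (hs n)).congr' ?_ .rfl
  filter_upwards [h n] with b hb
  rw [hb]
  ring

-- To second order only the term `j = 0` of the system contributes, with
-- `(n + 1) * puncturedPowerMean d n b → 1`.
theorem SolvesDeviationSystem.isBigO_sub_affine (h : SolvesDeviationSystem d F s)
    (hs : ∀ n, (fun b => s n b - a n) =O[atTop] fun b : ℕ => (b : ℝ)⁻¹) {n : ℕ} {c : ℝ}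
    (hsn : (fun b => s n b - (a n + c * (b : ℝ)⁻¹)) =O[atTop] fun b : ℕ => (b : ℝ)⁻¹ ^ 2) :
    (fun b => F n b - (a n + (c + a 0) * (b : ℝ)⁻¹)) =O[atTop] fun b : ℕ => (b : ℝ)⁻¹ ^ 2 := by
  have hF (n : ℕ) := h.isBigO_sub_const hs n
  have hF_one (n : ℕ) := isBigO_one_of_sub_const (hF n)
  have htrunc := isBigO_sum_range_mul_pow_sub (n := n) (N := 1) isBigO_natCast_inv_one
    fun j _ => isBigO_const_mul_mul_one ((n + 1).choose (j + 1) : ℝ)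
      (isBigO_puncturedPowerMean_one d (n - j)) (hF_one j)
  simp only [pow_one] at htrunc
  have hlead := (isBigO_mul_sub_mul (isBigO_puncturedPowerMean_sub d n) (hF 0)
    (isBigO_const_one ℝ _ _) (hF_one 0)).const_mul_left (n + 1 : ℝ)
  have hsum := (isBigO_refl (fun b : ℕ => (b : ℝ)⁻¹) atTop).mul (htrunc.add hlead)
  simp only [← sq] at hsum
  refine (hsum.add hsn).congr' ?_ .rfl
  filter_upwards [h n] with b hb
  rw [hb, Finset.sum_range_one, Nat.choose_one_right, Nat.sub_zero]
  push_cast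
  field_simp
  ring

end SolvesDeviationSystem

section ScaledDeviation

theorem isBigO_deviationSource_zero_sub (d n : ℕ) :
    (fun b => deviationSource d 0 n b - (n + 1) * (d + 1 / 2))
      =O[atTop] fun b : ℕ => (b : ℝ)⁻¹ := by
  have htrunc := isBigO_sum_range_mul_pow_sub (n := n) (N := 2)
    (c := fun j b => ((n + 1).choose j : ℝ) * complNode d b ^ (n + 1 - j) / (j + 1))
    isBigO_natCast_inv_one fun j _ => by
      have h := (isBigO_complNode_pow_one d (n + 1 - j)).const_mul_left
        (((n + 1).choose j : ℝ) / (j + 1))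
      exact h.congr_left fun b => (mul_div_right_comm _ _ _).symm
  have hhalf := ((isBigO_refl (fun b : ℕ => (b : ℝ)⁻¹) atTop).mul
    (isBigO_complNode_pow_sub_one d n)).const_mul_left ((n + 1) / 2 : ℝ)
  simp only [← sq] at hhalf
  have hsum := (htrunc.add (isBigO_complNode_pow_sub_affine d (n + 1))).add hhalf
  refine ((isBigO_refl (fun b : ℕ => (b : ℝ)) atTop).mul hsum.neg_left).congr' ?_ ?_
  · filter_upwards [eventually_gt_atTop 0] with b hb
    have hb' : (b : ℝ) ≠ 0 := by positivity
    rw [deviationSource, Finset.sum_range_succ _ 1, Finset.sum_range_one, Nat.choose_zero_right,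
      Nat.choose_one_right, Nat.sub_zero, Nat.add_sub_cancel]
    push_cast
    field_simp
    ring
  · filter_upwards [eventually_gt_atTop 0] with b hb
    have hb' : (b : ℝ) ≠ 0 := by positivity
    field_simp

theorem deviationSource_zero_zero {d b : ℕ} (hb : 0 < b) :
    deviationSource d 0 0 b = d + 1 / 2 := by
  have hb' : (b : ℝ) ≠ 0 := by positivity
  rw [deviationSource, Finset.sum_range_succ, Finset.sum_range_one, complNode]
  simp only [Nat.choose_self, Nat.choose_zero_right]
  push_cast
  field_simp
  ring

theorem isBigO_deviationSource_succ_sub {d k : ℕ} (n : ℕ)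
    (hF : ∀ n, (fun b => scaledDeviation d k n b - (n + 1) * (d + 1 / 2))
      =O[atTop] fun b : ℕ => (b : ℝ)⁻¹) :
    (fun b => deviationSource d (k + 1) n b - (n + 1) * (d + 1 / 2))
      =O[atTop] fun b : ℕ => (b : ℝ)⁻¹ := by
  have hF_one (j : ℕ) := isBigO_one_of_sub_const (hF j)
  have htrunc := isBigO_sum_range_mul_pow_sub (n := n) (N := 1) isBigO_natCast_inv_one
    fun j _ => isBigO_const_mul_mul_one ((n + 1).choose (j + 1) : ℝ)
      (isBigO_complNode_pow_one d (n - j)) (hF_one j)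
  simp only [pow_one] at htrunc
  have hlead := (isBigO_mul_sub_mul (isBigO_complNode_pow_sub_one d n) (hF 0)
    (isBigO_const_one ℝ _ _) (hF_one 0)).const_mul_left (n + 1 : ℝ)
  refine (htrunc.add hlead).congr_left fun b => ?_
  rw [deviationSource, Finset.sum_range_one, Nat.choose_one_right, Nat.sub_zero]
  push_cast
  ring

theorem isBigO_scaledDeviation_sub (d k n : ℕ) :
    (fun b => scaledDeviation d k n b - (n + 1) * (d + 1 / 2))
      =O[atTop] fun b : ℕ => (b : ℝ)⁻¹ := by
  induction k generalizing n with
  | zero =>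
    exact (solvesDeviationSystem_scaledDeviation d 0).isBigO_sub_const
      (isBigO_deviationSource_zero_sub d) n
  | succ k ih =>
    exact (solvesDeviationSystem_scaledDeviation d (k + 1)).isBigO_sub_const
      (fun n => isBigO_deviationSource_succ_sub n ih) n

theorem isBigO_deviationSource_sub (d k n : ℕ) :
    (fun b => deviationSource d k n b - (n + 1) * (d + 1 / 2))
      =O[atTop] fun b : ℕ => (b : ℝ)⁻¹ := by
  cases k with
  | zero => exact isBigO_deviationSource_zero_sub d n
  | succ k => exact isBigO_deviationSource_succ_sub n (isBigO_scaledDeviation_sub d k)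

theorem isBigO_deviationSource_succ_sub_affine {d k : ℕ} {c : ℝ}
    (hF : (fun b => scaledDeviation d k 0 b - (d + 1 / 2 + c * (b : ℝ)⁻¹))
      =O[atTop] fun b : ℕ => (b : ℝ)⁻¹ ^ 2) (n : ℕ) :
    (fun b => deviationSource d (k + 1) n b
        - ((n + 1) * (d + 1 / 2) + (n + 1) * (c - n * d * (d + 1 / 2)) * (b : ℝ)⁻¹))
      =O[atTop] fun b : ℕ => (b : ℝ)⁻¹ ^ 2 := by
  have hF_sub := isBigO_scaledDeviation_sub d k
  have hF_one (j : ℕ) := isBigO_one_of_sub_const (hF_sub j)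
  have htrunc := isBigO_sum_range_mul_pow_sub (n := n) (N := 2) isBigO_natCast_inv_one
    fun j _ => isBigO_const_mul_mul_one ((n + 1).choose (j + 1) : ℝ)
      (isBigO_complNode_pow_one d (n - j)) (hF_one j)
  have haffine : (fun b : ℕ => 1 + -(n * (d + 1) : ℝ) * (b : ℝ)⁻¹) =O[atTop] fun _ => (1 : ℝ) :=
    (isBigO_const_one ℝ _ _).add (isBigO_natCast_inv_one.const_mul_left _)
  have hterm₀ := (isBigO_mul_sub_mul (isBigO_complNode_pow_sub_affine d n) hF haffine
    (hF_one 0)).const_mul_left (n + 1 : ℝ)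
  have hterm₁ := ((isBigO_refl (fun b : ℕ => (b : ℝ)⁻¹) atTop).mul
    (isBigO_mul_sub_mul (isBigO_complNode_pow_sub_one d (n - 1)) (hF_sub 1)
      (isBigO_const_one ℝ _ _) (hF_one 1))).const_mul_left ((n + 1) * n / 2 : ℝ)
  simp only [← sq] at hterm₁
  have hcross := (isBigO_refl (fun b : ℕ => (b : ℝ)⁻¹ ^ 2) atTop).const_mul_left
    (-((n + 1) * (n * (d + 1)) * c) : ℝ)
  refine (((htrunc.add hterm₀).add hterm₁).add hcross).congr_left fun b => ?_
  rw [deviationSource, Finset.sum_range_succ _ (n + 1), Nat.choose_succ_self,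
    Finset.sum_range_succ _ 1, Finset.sum_range_one, Nat.choose_one_right, Nat.cast_choose_two,
    Nat.sub_zero]
  push_cast
  ring

theorem isBigO_scaledDeviation_zero_sub_affine (d k : ℕ) :
    (fun b => scaledDeviation d k 0 b - (d + 1 / 2 + (k + 1) * (d + 1 / 2) * (b : ℝ)⁻¹))
      =O[atTop] fun b : ℕ => (b : ℝ)⁻¹ ^ 2 := by
  induction k with
  | zero =>
    have hsource : (fun b => deviationSource d 0 0 b
        - (((0 : ℕ) + 1) * (d + 1 / 2) + 0 * (b : ℝ)⁻¹)) =O[atTop] fun b : ℕ => (b : ℝ)⁻¹ ^ 2 := by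
      refine (isBigO_zero _ _).congr' ?_ .rfl
      filter_upwards [eventually_gt_atTop 0] with b hb
      rw [deviationSource_zero_zero hb]
      ring
    refine ((solvesDeviationSystem_scaledDeviation d 0).isBigO_sub_affine
      (isBigO_deviationSource_sub d 0) hsource).congr_left fun b => ?_
    push_cast
    ring
  | succ k ih =>
    refine ((solvesDeviationSystem_scaledDeviation d (k + 1)).isBigO_sub_affine
      (isBigO_deviationSource_sub d (k + 1))
      (isBigO_deviationSource_succ_sub_affine ih 0)).congr_left fun b => ?_
    push_cast
    ring

theorem isBigO_scaledDeviation_succ_sub_affine (d k n : ℕ) :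
    (fun b => scaledDeviation d (k + 1) n b - ((n + 1) * (d + 1 / 2)
        + (d + 1 / 2) * (1 + (n + 1) * (k + 1) - (n + 1) * n * d) * (b : ℝ)⁻¹))
      =O[atTop] fun b : ℕ => (b : ℝ)⁻¹ ^ 2 := by
  have hsource := isBigO_deviationSource_succ_sub_affine
    (isBigO_scaledDeviation_zero_sub_affine d k) n
  refine ((solvesDeviationSystem_scaledDeviation d (k + 1)).isBigO_sub_affine
    (isBigO_deviationSource_sub d (k + 1)) hsource).congr_left fun b => ?_
  push_cast
  ring

end ScaledDeviation

theorem momentV_k_asymptotic (d k m : ℕ) (hk : 1 ≤ k) (hm : 1 ≤ m) :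
    (fun b : ℕ => momentV b d k m -
      ((b : ℝ) / ((m : ℝ) + 1) + ((d : ℝ) + 1 / 2) * m / (b : ℝ) ^ (2 * k + 1)
        + ((d : ℝ) + 1 / 2) * (1 + (m : ℝ) * k - (m : ℝ) * ((m : ℝ) - 1) * d)
          / (b : ℝ) ^ (2 * k + 2)))
      =O[atTop] fun b : ℕ => ((b : ℝ) ^ (2 * k + 3))⁻¹ := by
  obtain ⟨n, rfl⟩ := Nat.exists_eq_add_of_le' hm
  obtain ⟨k, rfl⟩ := Nat.exists_eq_add_of_le' hk
  have hunscale := (isBigO_refl (fun b : ℕ => ((b : ℝ) ^ (2 * (k + 1) + 1))⁻¹) atTop).mul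
    (isBigO_scaledDeviation_succ_sub_affine d k n)
  refine hunscale.congr' ?_ ?_
  · filter_upwards [eventually_gt_atTop 0] with b hb
    have hb' : (b : ℝ) ≠ 0 := by positivity
    rw [scaledDeviation, deviation]
    push_cast
    field_simp
    ring
  · exact .of_forall fun b => by ring
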